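/- arXiv:0906.3728 — 5 statements merged into one kernel-verified Lean document; each statement's English description precedes it below -/
import Mathlib

section
/- Let x be a root of F(X,u) in some extension field of K(u). Then u = 𝒫(x)/𝒬(x), so that K(u)(x) = K(x), and K(x) is a Galois extension of K(u) whose Galois group is cyclic of order ℓ (isomorphic to ℤ/ℓℤ). -/
set_option synthInstance.maxHeartbeats 1000000
set_option maxHeartbeats 1000000

open Polynomial

lemma aux_galois {F N : Type*} [Field F] [Field N] [Algebra F N] (ℓ : ℕ) (hℓ : ℓ.Prime)
    (hfin : Module.finrank F N = ℓ) (σ : N ≃ₐ[F] N) (hσ : σ ≠ 1) :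
    IsGalois F N ∧ Nonempty ((N ≃ₐ[F] N) ≃* Multiplicative (ZMod ℓ)) := by
  have : FiniteDimensional F N := Module.finite_of_finrank_pos (hfin ▸ hℓ.pos)
  have := IntermediateField.isSimpleOrder_of_finrank_prime F N (hfin ▸ hℓ)
  have : Fact ℓ.Prime := ⟨hℓ⟩
  have hgal : IsGalois F N := by
    apply IsGalois.of_fixedField_eq_bot
    rcases eq_bot_or_eq_top (IntermediateField.fixedField (⊤ : Subgroup (N ≃ₐ[F] N))) with h | h
    · exact h
    · exfalso
      apply hσ
      ext y
      have hy : y ∈ IntermediateField.fixedField (⊤ : Subgroup (N ≃ₐ[F] N)) := by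
        rw [h]; trivial
      rw [IntermediateField.mem_fixedField_iff] at hy
      exact hy σ trivial
  refine ⟨hgal, ?_⟩
  have hc : Nat.card (N ≃ₐ[F] N) = ℓ := by
    rw [IsGalois.card_aut_eq_finrank, hfin]
  have : IsCyclic (N ≃ₐ[F] N) := isCyclic_of_prime_card hc
  have := zmodCyclicMulEquiv (inferInstance : IsCyclic (N ≃ₐ[F] N))
  rw [hc] at this
  exact ⟨this.symm⟩

lemma aux_irr {K : Type*} [Field K] (P Q : K[X]) (hPm : P.Monic)
    (hdeg : Q.degree < P.degree) (hco : IsCoprime P Q) (hQ0 : Q ≠ 0) :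
    (P.map (algebraMap K (RatFunc K)) -
      C RatFunc.X * Q.map (algebraMap K (RatFunc K))).Monic ∧
    (P.map (algebraMap K (RatFunc K)) -
      C RatFunc.X * Q.map (algebraMap K (RatFunc K))).natDegree = P.natDegree ∧
    Irreducible (P.map (algebraMap K (RatFunc K)) -
      C RatFunc.X * Q.map (algebraMap K (RatFunc K))) := by
  set G : K[X][X] := P.map C - C X * Q.map C with hG
  have hmap : G.map (algebraMap K[X] (RatFunc K)) = P.map (algebraMap K (RatFunc K)) -
      C RatFunc.X * Q.map (algebraMap K (RatFunc K)) := by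
    rw [hG, Polynomial.map_sub, Polynomial.map_mul, Polynomial.map_map, Polynomial.map_map, map_C,
      RatFunc.algebraMap_X]
    have : (algebraMap K[X] (RatFunc K)).comp C = algebraMap K (RatFunc K) := by
      ext a; simp [RatFunc.algebraMap_eq_C]
    rw [this]
  have hd : (C (X : K[X]) * Q.map C).degree < (P.map (C : K →+* K[X])).degree := by
    rw [degree_C_mul X_ne_zero, degree_map_eq_of_injective C_injective,
      degree_map_eq_of_injective C_injective]
    exact hdeg
  have hGm : G.Monic := (hPm.map C).sub_of_left hd
  have hGd : G.natDegree = P.natDegree := by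
    rw [hG, natDegree_eq_natDegree (degree_sub_eq_left_of_degree_lt hd),
      natDegree_map_eq_of_injective C_injective]
  have hGi : Irreducible G := by
    have h1 : Irreducible (C (-Q) * X + C P : K[X][X]) :=
      irreducible_C_mul_X_add_C (neg_ne_zero.mpr hQ0) (hco.symm.neg_left.isRelPrime)
    have h2 : Bivariate.swap (R := K) (C (-Q) * X + C P) = G := by
      rw [map_add, map_mul, Bivariate.swap_C, Bivariate.swap_C, Bivariate.swap_Y, hG]
      simp; ring
    rw [← h2]
    exact (MulEquiv.irreducible_iff _).mpr h1
  rw [← hmap]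
  refine ⟨hGm.map _, by rw [hGm.natDegree_map, hGd], ?_⟩
  exact (hGm.irreducible_iff_irreducible_map_fraction_map).mp hGi

lemma aux_embed (ℓ : ℕ) (L : Type*) [Field L] (K : Subfield L) (ζ : L)
    (hζ0 : ζ ≠ 0) (w : K) (hw : (w : L) = ζ + ζ⁻¹) (hζ1 : ζ ^ ℓ = 1) (hne : ζ⁻¹ - ζ ≠ 0)
    (P Q : Polynomial K)
    (hP : P.map K.subtype =
      C (ζ⁻¹ - ζ)⁻¹ * (C ζ⁻¹ * (X - C ζ) ^ ℓ - C ζ * (X - C ζ⁻¹) ^ ℓ))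
    (hQ : Q.map K.subtype =
      C (ζ⁻¹ - ζ)⁻¹ * ((X - C ζ) ^ ℓ - (X - C ζ⁻¹) ^ ℓ))
    (Ω : Type*) [Field Ω] [IsAlgClosed Ω] (f : K →+* Ω) :
    ∃ z : Ω, z ≠ 0 ∧ z ^ ℓ = 1 ∧ f w = z + z⁻¹ ∧ z⁻¹ - z ≠ 0 ∧
      P.map f = C (z⁻¹ - z)⁻¹ * (C z⁻¹ * (X - C z) ^ ℓ - C z * (X - C z⁻¹) ^ ℓ) ∧
      Q.map f = C (z⁻¹ - z)⁻¹ * ((X - C z) ^ ℓ - (X - C z⁻¹) ^ ℓ) := by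
  let : Algebra K Ω := f.toAlgebra
  let M := IntermediateField.adjoin K {ζ}
  have hint : IsIntegral K ζ := by
    refine ⟨X ^ 2 - C w * X + 1, by monicity!, ?_⟩
    rw [← aeval_def]
    simp only [map_add, map_sub, map_mul, map_pow, aeval_X, aeval_C, map_one]
    change ζ ^ 2 - (w : L) * ζ + 1 = 0
    rw [hw]; field_simp; ring
  have : FiniteDimensional K M := IntermediateField.adjoin.finiteDimensional hint
  let φ : M →ₐ[K] Ω := IsAlgClosed.lift
  let g : M := IntermediateField.AdjoinSimple.gen K ζ
  have hg : M.val g = ζ := IntermediateField.AdjoinSimple.coe_gen K ζ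
  have hg' : (g : L) = ζ := hg
  have hφ : f = (φ : M →+* Ω).comp (algebraMap K M) := by
    ext a; exact (φ.commutes a).symm
  have hs : K.subtype = (M.val : M →+* L).comp (algebraMap K M) := by
    ext a; rfl
  have hinj : Function.Injective (M.val : M →+* L) := (M.val : M →+* L).injective
  have hP' : P.map (algebraMap K M) =
      C (g⁻¹ - g)⁻¹ * (C g⁻¹ * (X - C g) ^ ℓ - C g * (X - C g⁻¹) ^ ℓ) := by
    apply Polynomial.map_injective _ hinj
    rw [Polynomial.map_map, ← hs, hP]
    simp [hg']
  have hQ' : Q.map (algebraMap K M) =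
      C (g⁻¹ - g)⁻¹ * ((X - C g) ^ ℓ - (X - C g⁻¹) ^ ℓ) := by
    apply Polynomial.map_injective _ hinj
    rw [Polynomial.map_map, ← hs, hQ]
    simp [hg']
  refine ⟨φ g, ?_, ?_, ?_, ?_, ?_, ?_⟩
  · rw [_root_.map_ne_zero]
    intro h; apply hζ0; rw [← hg, h, map_zero]
  · rw [← map_pow, ← map_one φ]; congr 1
    apply hinj; simpa [hg'] using hζ1
  · rw [hφ, ← map_inv₀, ← map_add, RingHom.comp_apply]
    change φ _ = φ _
    congr 1
    apply hinj
    simp only [RingHom.coe_coe, map_add, map_inv₀, hg, ← hw]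
    rfl
  · rw [← map_inv₀, ← map_sub, _root_.map_ne_zero]
    intro h; apply hne; rw [← hg, ← map_inv₀, ← map_sub, h, map_zero]
  · rw [hφ, ← Polynomial.map_map, hP']; simp
  · rw [hφ, ← Polynomial.map_map, hQ']; simp

lemma aux_form (ℓ : ℕ) (Ω : Type*) [Field Ω] (z a : Ω) (hz0 : z ≠ 0) (hz : z ^ ℓ = 1)
    (hne : z⁻¹ - z ≠ 0) (P Q : Polynomial Ω)
    (hP : P = C (z⁻¹ - z)⁻¹ * (C z⁻¹ * (X - C z) ^ ℓ - C z * (X - C z⁻¹) ^ ℓ))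
    (hQ : Q = C (z⁻¹ - z)⁻¹ * ((X - C z) ^ ℓ - (X - C z⁻¹) ^ ℓ))
    (hb : z + z⁻¹ + 1 - a ≠ 0) (u : Ω) (h : P.eval a - u * Q.eval a = 0) :
    P.eval ((a + 1) / (z + z⁻¹ + 1 - a)) - u * Q.eval ((a + 1) / (z + z⁻¹ + 1 - a)) = 0 := by
  set b := z + z⁻¹ + 1 - a with hbdef
  have e1 : (a + 1) / b - z = (1 + z) / b * (a - z) := by
    field_simp
    rw [hbdef]; field_simp; ring
  have e2 : (a + 1) / b - z⁻¹ = (1 + z⁻¹) / b * (a - z⁻¹) := by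
    rw [div_mul_eq_mul_div, div_sub' hb]
    congr 1
    rw [hbdef]; field_simp; ring
  have e3 : (1 + z⁻¹) ^ ℓ = (1 + z) ^ ℓ := by
    have : 1 + z = z * (1 + z⁻¹) := by field_simp; ring
    rw [this, mul_pow, hz, one_mul]
  subst hP hQ
  simp only [eval_mul, eval_sub, eval_pow, eval_C, eval_X] at h ⊢
  rw [e1, e2, mul_pow, mul_pow, div_pow, div_pow, e3]
  linear_combination ((1 + z) ^ ℓ / b ^ ℓ) * h

/-- degrees and coprimality over `L` -/
lemma aux_deg (ℓ : ℕ) (hℓ : ℓ ≠ 0) (Ω : Type*) [Field Ω] (z : Ω)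
    (hne : z⁻¹ - z ≠ 0) (P Q : Polynomial Ω)
    (hP : P = C (z⁻¹ - z)⁻¹ * (C z⁻¹ * (X - C z) ^ ℓ - C z * (X - C z⁻¹) ^ ℓ))
    (hQ : Q = C (z⁻¹ - z)⁻¹ * ((X - C z) ^ ℓ - (X - C z⁻¹) ^ ℓ)) :
    P.Monic ∧ P.natDegree = ℓ ∧ Q.degree < P.degree ∧ IsCoprime P Q := by
  have h1 : P - C z * Q = (X - C z) ^ ℓ := by
    have : (C (z⁻¹ - z)⁻¹ : Polynomial Ω) * (C z⁻¹ - C z) = 1 := by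
      rw [← C_sub, ← C_mul, inv_mul_cancel₀ hne, C_1]
    rw [hP, hQ]; linear_combination (X - C z) ^ ℓ * this
  have h2 : P - C z⁻¹ * Q = (X - C z⁻¹) ^ ℓ := by
    have : (C (z⁻¹ - z)⁻¹ : Polynomial Ω) * (C z⁻¹ - C z) = 1 := by
      rw [← C_sub, ← C_mul, inv_mul_cancel₀ hne, C_1]
    rw [hP, hQ]; linear_combination (X - C z⁻¹) ^ ℓ * this
  have d1 : ((X - C z) ^ ℓ : Polynomial Ω).degree = ℓ := by simp
  have d2 : ((X - C z⁻¹) ^ ℓ : Polynomial Ω).degree = ℓ := by simp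
  have hQd : Q.degree < ℓ := by
    rw [hQ, degree_C_mul (inv_ne_zero hne)]
    refine (degree_sub_lt_left (d1.trans d2.symm) ?_ ?_).trans_eq d1
    · exact pow_ne_zero _ (X_sub_C_ne_zero _)
    · rw [((monic_X_sub_C z).pow ℓ).leadingCoeff, ((monic_X_sub_C z⁻¹).pow ℓ).leadingCoeff]
  have hzQ : (C z * Q).degree < ((X - C z) ^ ℓ : Polynomial Ω).degree := by
    rw [d1]
    refine lt_of_le_of_lt ?_ hQd
    rw [C_mul']
    exact degree_smul_le _ _
  have hPe : P = (X - C z) ^ ℓ + C z * Q := by rw [← h1]; ring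
  have hPm : P.Monic := by
    rw [hPe]; exact ((monic_X_sub_C z).pow ℓ).add_of_left hzQ
  have hPd : P.degree = ℓ := by
    rw [hPe, degree_add_eq_left_of_degree_lt hzQ, d1]
  refine ⟨hPm, natDegree_eq_of_degree_eq_some hPd, hPd ▸ hQd, ?_⟩
  have hc : IsCoprime (P - C z * Q) (P - C z⁻¹ * Q) := by
    rw [h1, h2]
    apply IsCoprime.pow
    apply isCoprime_X_sub_C_of_isUnit_sub
    rw [← neg_sub]
    exact (isUnit_iff_ne_zero.mpr hne).neg
  obtain ⟨s, t, hst⟩ := hc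
  exact ⟨s + t, -(s * C z) - t * C z⁻¹, by rw [← hst]; ring⟩


/-- Let `x` be a root of Rikuna's polynomial `F(X,u) = 𝒫(X) - u 𝒬(X)` in an extension `E`
of `K(u)`.  Then `u = 𝒫(x)/𝒬(x)`, the subfield of `E` generated by (the image of) `K` and
`x` coincides with the one generated by `K(u)` and `x` (i.e. `K(u)(x) = K(x)`), and
`K(u)(x)` is a Galois extension of `K(u)` with Galois group isomorphic to `ℤ/ℓℤ`. -/
theorem stmt_1 (ℓ : ℕ) (hℓ : ℓ.Prime) (hodd : Odd ℓ)
    (L : Type*) [Field L] (hchar : (ℓ : L) ≠ 0)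
    (K : Subfield L) (ζ : L) (hζ : IsPrimitiveRoot ζ ℓ) (hζK : ζ ∉ K) (hω : ζ + ζ⁻¹ ∈ K)
    (P Q : Polynomial K)
    (hP : P.map K.subtype =
      C (ζ⁻¹ - ζ)⁻¹ * (C ζ⁻¹ * (X - C ζ) ^ ℓ - C ζ * (X - C ζ⁻¹) ^ ℓ))
    (hQ : Q.map K.subtype =
      C (ζ⁻¹ - ζ)⁻¹ * ((X - C ζ) ^ ℓ - (X - C ζ⁻¹) ^ ℓ))
    (E : Type*) [Field E] [Algebra (RatFunc K) E] (x : E)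
    (hx : Polynomial.aeval x (P.map (algebraMap K (RatFunc K)) -
      C RatFunc.X * Q.map (algebraMap K (RatFunc K))) = 0) :
    (algebraMap (RatFunc K) E RatFunc.X =
        Polynomial.aeval x (P.map (algebraMap K (RatFunc K))) /
          Polynomial.aeval x (Q.map (algebraMap K (RatFunc K)))) ∧
    (Subfield.closure
        (Set.range ((algebraMap (RatFunc K) E).comp (algebraMap K (RatFunc K))) ∪ {x}) =
      Subfield.closure (Set.range (algebraMap (RatFunc K) E) ∪ {x})) ∧
    IsGalois (RatFunc K) (IntermediateField.adjoin (RatFunc K) {x}) ∧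
    Nonempty ((IntermediateField.adjoin (RatFunc K) {x} ≃ₐ[RatFunc K]
        IntermediateField.adjoin (RatFunc K) {x}) ≃* Multiplicative (ZMod ℓ)) := by
  have hℓ3 : 3 ≤ ℓ := by
    have := hℓ.two_le
    rcases hodd with ⟨k, rfl⟩
    omega
  have hζ0 : ζ ≠ 0 := hζ.ne_zero hℓ.ne_zero
  have hne : ζ⁻¹ - ζ ≠ 0 := by
    intro h
    have h2 : ζ ^ 2 = 1 := by
      have : ζ⁻¹ = ζ := sub_eq_zero.mp h
      rw [pow_two]
      nth_rewrite 1 [← this]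
      exact inv_mul_cancel₀ hζ0
    have := Nat.le_of_dvd (by norm_num) (hζ.dvd_of_pow_eq_one 2 h2)
    omega
  obtain ⟨hm, hnd, hdeg, hco⟩ := aux_deg ℓ hℓ.ne_zero L ζ hne _ _ hP hQ
  rw [Polynomial.isCoprime_map] at hco
  rw [degree_map, degree_map] at hdeg
  rw [natDegree_map] at hnd
  have hPm : P.Monic := Polynomial.monic_of_injective K.subtype.injective hm
  have hQ0 : Q ≠ 0 := by
    rintro rfl
    have := natDegree_eq_zero_of_isUnit (isCoprime_zero_right.mp hco)
    omega
  obtain ⟨hFm, hFd, hFi⟩ := aux_irr P Q hPm hdeg hco hQ0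
  rw [hnd] at hFd
  set F := P.map (algebraMap K (RatFunc K)) -
      C RatFunc.X * Q.map (algebraMap K (RatFunc K)) with hF
  have hmin : minpoly (RatFunc K) x = F := (minpoly.eq_of_irreducible_of_monic hFi hx hFm).symm
  have hint : IsIntegral (RatFunc K) x := ⟨F, hFm, hx⟩
  have hx' : aeval x (P.map (algebraMap K (RatFunc K))) = algebraMap (RatFunc K) E RatFunc.X *
      aeval x (Q.map (algebraMap K (RatFunc K))) := by
    rw [hF, map_sub, map_mul, aeval_C, sub_eq_zero] at hx
    exact hx
  have hQx : aeval x (Q.map (algebraMap K (RatFunc K))) ≠ 0 := by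
    intro h
    rw [h, mul_zero] at hx'
    have hco' := hco.map (mapRingHom (algebraMap K (RatFunc K)))
    obtain ⟨s, t, hst⟩ := hco'
    have := congrArg (aeval x) hst
    rw [coe_mapRingHom, map_add, map_mul, map_mul, h, hx'] at this
    simp at this
  have hu : algebraMap (RatFunc K) E RatFunc.X =
        Polynomial.aeval x (P.map (algebraMap K (RatFunc K))) /
          Polynomial.aeval x (Q.map (algebraMap K (RatFunc K))) := by
    rw [eq_div_iff hQx, hx']
  refine ⟨hu, ?_, ?_⟩
  · apply le_antisymm
    · apply Subfield.closure_mono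
      apply Set.union_subset_union_left
      rintro _ ⟨a, rfl⟩
      exact ⟨_, rfl⟩
    · rw [Subfield.closure_le]
      set S := Subfield.closure
        (Set.range ((algebraMap (RatFunc K) E).comp (algebraMap K (RatFunc K))) ∪ {x}) with hS
      have hxS : x ∈ S := Subfield.subset_closure (Or.inr rfl)
      have hKS : ∀ a : K, algebraMap (RatFunc K) E (algebraMap K (RatFunc K) a) ∈ S :=
        fun a => Subfield.subset_closure (Or.inl ⟨a, rfl⟩)
      have hpol : ∀ (y : E), y ∈ S → ∀ p : Polynomial K,
          aeval y (p.map (algebraMap K (RatFunc K))) ∈ S := by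
        intro y hy p
        rw [aeval_eq_sum_range]
        refine sum_mem fun i _ => ?_
        rw [Algebra.smul_def, coeff_map]
        exact mul_mem (hKS _) (pow_mem hy _)
      have huS : algebraMap (RatFunc K) E RatFunc.X ∈ S := by
        rw [hu]; exact div_mem (hpol x hxS P) (hpol x hxS Q)
      have hpu : ∀ p : Polynomial K,
          algebraMap (RatFunc K) E (algebraMap (Polynomial K) (RatFunc K) p) ∈ S := by
        intro p
        have := hpol _ huS p
        rw [aeval_algebraMap_apply] at this
        convert this
        rw [aeval_map_algebraMap, RatFunc.aeval_X_left_eq_algebraMap]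
      rintro y (⟨r, rfl⟩ | hy)
      · change _ ∈ S
        rw [← RatFunc.num_div_denom r, map_div₀]
        exact div_mem (hpu _) (hpu _)
      · rw [hy]; exact hxS
  · set N := IntermediateField.adjoin (RatFunc K) {x} with hN
    have hfin : Module.finrank (RatFunc K) N = ℓ := by
      rw [hN, IntermediateField.adjoin.finrank hint, hmin, hFd]
    let y : N := IntermediateField.AdjoinSimple.gen (RatFunc K) x
    have hminy : minpoly (RatFunc K) y = F := by
      rw [← hmin]; exact IntermediateField.minpoly_gen (RatFunc K) x
    have hsmall : ∀ p : Polynomial (RatFunc K), p.Monic → p.natDegree ≤ 2 → aeval y p ≠ 0 := by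
      intro p hp hp2 h0
      have h1 := natDegree_le_of_dvd (minpoly.dvd (RatFunc K) y h0) hp.ne_zero
      rw [hminy, hFd] at h1
      omega
    let w : K := ⟨ζ + ζ⁻¹, hω⟩
    let v : RatFunc K := algebraMap K (RatFunc K) w
    have hb : algebraMap (RatFunc K) N v + 1 - y ≠ 0 := by
      intro h
      apply hsmall (X - C (v + 1)) (monic_X_sub_C _) (by rw [natDegree_X_sub_C]; norm_num)
      simp only [map_sub, aeval_X, aeval_C, map_add, map_one]
      linear_combination -h
    let y' : N := (y + 1) / (algebraMap (RatFunc K) N v + 1 - y)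
    have hyF : aeval y F = 0 := by rw [← hminy]; exact minpoly.aeval _ _
    have hroot : aeval y' F = 0 := by
      let Ω := AlgebraicClosure N
      let i : N →+* Ω := algebraMap N Ω
      let j : RatFunc K →+* Ω := i.comp (algebraMap (RatFunc K) N)
      let f : K →+* Ω := j.comp (algebraMap K (RatFunc K))
      obtain ⟨z, hz0, hz1, hzw, hzne, hPz, hQz⟩ := aux_embed ℓ L K ζ hζ0 w rfl hζ.pow_eq_one hne
        P Q hP hQ Ω f
      have key : ∀ a : N, i (aeval a F) = (P.map f).eval (i a) -
          j RatFunc.X * (Q.map f).eval (i a) := by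
        intro a
        rw [aeval_def, hom_eval₂, hF, eval₂_sub, eval₂_mul, eval₂_C, eval₂_map, eval₂_map,
          eval_map, eval_map]
      have hiv : i (algebraMap (RatFunc K) N v) = z + z⁻¹ := hzw
      have hb' : z + z⁻¹ + 1 - i y ≠ 0 := by
        rw [← hiv, ← map_one i, ← map_add, ← map_sub, _root_.map_ne_zero]
        exact hb
      have h1 := aux_form ℓ Ω z (i y) hz0 hz1 hzne _ _ hPz hQz hb' (j RatFunc.X)
        (by rw [← key, hyF, map_zero])
      apply i.injective
      rw [key, map_zero]
      have hy' : i y' = (i y + 1) / (z + z⁻¹ + 1 - i y) := by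
        simp only [y', map_div₀, map_add, map_sub, map_one, hiv]
      rw [hy']
      exact h1
    have : FiniteDimensional (RatFunc K) N := Module.finite_of_finrank_pos (hfin ▸ hℓ.pos)
    let pb := IntermediateField.adjoin.powerBasis hint
    have hgen : pb.gen = y := IntermediateField.adjoin.powerBasis_gen hint
    let σ : N →ₐ[RatFunc K] N := pb.lift y' (by rw [hgen, hminy]; exact hroot)
    have hσy : σ y = y' := by
      have := pb.lift_gen y' (by rw [hgen, hminy]; exact hroot)
      exact (congrArg σ hgen).symm.trans this
    let τ : N ≃ₐ[RatFunc K] N := AlgEquiv.ofBijective σ (Algebra.IsAlgebraic.algHom_bijective σ)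
    apply aux_galois ℓ hℓ hfin τ
    intro h
    have hyy : y' = y := by
      rw [← hσy]
      exact congrArg (fun t : N ≃ₐ[RatFunc K] N => t y) h
    apply hsmall (X ^ 2 - C v * X + 1) (by monicity!) (by compute_degree!)
    simp only [map_add, map_sub, map_mul, map_pow, aeval_X, aeval_C, map_one]
    rw [div_eq_iff hb] at hyy
    linear_combination hyy
end

section
/- Let x be a root of F(X,u) in an extension of K(u), so that K(u)(x)/K(u) is a field extension of degree ℓ. The discriminant of the power basis 1, x, x², …, x^{ℓ−1} of K(u)(x) over K(u) (equivalently, the discriminant of the degree-ℓ polynomial F(X,u)) equals ℓ^ℓ · (4 − ω²)^{(ℓ−1)(ℓ−2)/2} · (u² − ωu + 1)^{ℓ−1}. -/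
set_option synthInstance.maxHeartbeats 1000000
set_option maxHeartbeats 1000000

open Polynomial

theorem prod_emb {R E M : Type*} [Field R] [Field E] [Algebra R E] [Field M] [IsAlgClosed M]
    [Algebra R M] [FiniteDimensional R E] (pb : PowerBasis R E) (hs : (minpoly R pb.gen).Separable) (y : M) :
    ∏ σ : E →ₐ[R] M, (y - σ pb.gen) = ((minpoly R pb.gen).map (algebraMap R M)).eval y := by
  classical
  have h1 := (IsAlgClosed.splits ((minpoly R pb.gen).map (algebraMap R M))).eval_eq_prod_roots_of_monic
    ((minpoly.monic pb.isIntegral_gen).map _) y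
  rw [h1]
  rw [Fintype.prod_equiv pb.liftEquiv' (fun σ : E →ₐ[R] M => y - σ pb.gen) (fun x => y - (x : M))
    (by intro σ; simp)]
  rw [Finset.prod_mem_multiset _ (fun x => y - (x : M)) (fun x => y - x) (by intro x; rfl),
    Finset.prod_eq_multiset_prod, Multiset.toFinset_val,
      Multiset.dedup_eq_self.mpr]
  exact nodup_roots (.map hs)

theorem key_alg {M : Type*} [Field M] (m : ℕ) (z z' u s D : M) (hd : z' - z ≠ 0)
    (e2 : (z' - u) * (s - z) ^ (m + 1) - (z - u) * (s - z') ^ (m + 1) = 0) (hm : Even m)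
    (hD : D = (z' - z)⁻¹ * ((z' - u) * ((m + 1) * (s - z) ^ m) - (z - u) * ((m + 1) * (s - z') ^ m))) :
    D * (z' - s) = -((m + 1) * (u - z')) * (z - s) ^ m := by
  rw [← hm.neg_pow (z - s), neg_sub, hD]
  field_simp
  linear_combination (-(m + 1)) * e2

theorem fin_alg {M : Type*} [Field M] (k : ℕ) (z z' u N a : M) (hzz : z * z' = 1) (hd : z' - z ≠ 0)
    (hu : u - z' ≠ 0)
    (hp : N * ((z' - z)⁻¹ * ((z' - u) * (z' - z) ^ (2 * k + 3) - (z - u) * (z' - z') ^ (2 * k + 3))) =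
      (-(a * (u - z'))) ^ (2 * k + 3) *
      ((z' - z)⁻¹ * ((z' - u) * (z - z) ^ (2 * k + 3) - (z - u) * (z - z') ^ (2 * k + 3))) ^ (2 * k + 2)) :
    (-1) ^ ((2 * k + 3) * (k + 1)) * N = a ^ (2 * k + 3) * (4 - (z + z') ^ 2) ^ ((k + 1) * (2 * k + 1)) *
        (u ^ 2 - (z + z') * u + 1) ^ (2 * k + 2) := by
  have h1 : (z' - z)⁻¹ * ((z' - u) * (z' - z) ^ (2 * k + 3) - (z - u) * (z' - z') ^ (2 * k + 3))
    = (z' - u) * (z' - z) ^ (2 * k + 2) := by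
    rw [sub_self z', zero_pow (by omega)]; field_simp; ring
  have h2 : (z' - z)⁻¹ * ((z' - u) * (z - z) ^ (2 * k + 3) - (z - u) * (z - z') ^ (2 * k + 3))
    = (z - u) * (z' - z) ^ (2 * k + 2) := by
    have : (z - z') ^ (2 * k + 3) = - (z' - z) ^ (2 * k + 3) := by
      rw [← neg_sub, Odd.neg_pow ⟨k + 1, by ring⟩]
    rw [sub_self z, zero_pow (by omega), this]; field_simp; ring
  rw [h1, h2] at hp
  have e1 : 4 - (z + z') ^ 2 = (-1) * (z' - z) ^ 2 := by linear_combination (-4) * hzz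
  have e2 : u ^ 2 - (z + z') * u + 1 = (z' - u) * (z - u) := by linear_combination (-1) * hzz
  have hN : N = a ^ (2 * k + 3) * ((z' - u) * (z - u)) ^ (2 * k + 2) *
      ((z' - z) ^ 2) ^ ((k + 1) * (2 * k + 1)) := by
    have hne : (z' - u) * (z' - z) ^ (2 * k + 2) ≠ 0 :=
      mul_ne_zero (by rw [← neg_sub]; exact neg_ne_zero.mpr hu) (pow_ne_zero _ hd)
    apply mul_right_cancel₀ hne
    rw [hp]
    have : -(a * (u - z')) = a * (z' - u) := by ring
    rw [this]
    generalize z' - u = p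
    generalize z - u = q
    generalize z' - z = d
    ring
  rw [hN, e1, e2, mul_pow (-1 : M)]
  have hs : (-1 : M) ^ ((2 * k + 3) * (k + 1)) = (-1) ^ ((k + 1) * (2 * k + 1)) := by
    have : (2 * k + 3) * (k + 1) = (k + 1) * (2 * k + 1) + 2 * (k + 1) := by ring
    rw [this, pow_add, pow_mul (-1 : M) 2]; simp
  rw [hs]; ring

theorem discr_pb {R E M : Type*} [Field R] [Field E] [Algebra R E] [Field M] [IsAlgClosed M]
    [Algebra R M] [FiniteDimensional R E] [Algebra.IsSeparable R E] (pb : PowerBasis R E) (ℓ : ℕ) (h : pb.dim = ℓ)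
    (hodd : Odd ℓ) (hℓ : 2 ≤ ℓ) (z z' u : M) (hzz : z * z' = 1) (hne : z ≠ z') (hu : u ≠ z')
    (hF : (minpoly R pb.gen).map (algebraMap R M) = C (z' - z)⁻¹ *
      (C (z' - u) * (X - C z) ^ ℓ - C (z - u) * (X - C z') ^ ℓ)) :
    algebraMap R M (Algebra.discr R (fun i : Fin ℓ => pb.gen ^ (i : ℕ))) =
      (ℓ : M) ^ ℓ * (4 - (z + z') ^ 2) ^ ((ℓ - 1) * (ℓ - 2) / 2) *
        (u ^ 2 - (z + z') * u + 1) ^ (ℓ - 1) := by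
  have hs := Algebra.IsSeparable.isSeparable R pb.gen
  have hcard : Fintype.card (E →ₐ[R] M) = ℓ := by
    rw [AlgHom.card, pb.finrank, h]
  have hz' : z' - z ≠ 0 := sub_ne_zero.mpr hne.symm
  have hu' : u - z' ≠ 0 := sub_ne_zero.mpr hu
  subst h
  have hb : (fun i : Fin pb.dim => pb.gen ^ (i : ℕ)) = pb.basis := by
    ext i; simp
  rw [hb, Algebra.discr_powerBasis_eq_norm, map_mul, Algebra.norm_eq_prod_embeddings R M,
    pb.finrank]
  clear hb
  generalize pb.dim = n at *
  obtain ⟨m, hm⟩ := hodd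
  obtain ⟨k, rfl⟩ : ∃ k, m = k + 1 := ⟨m - 1, by omega⟩
  obtain rfl : n = 2 * k + 3 := by omega
  clear hm
  have key : ∀ σ : E →ₐ[R] M, σ (aeval pb.gen (derivative (minpoly R pb.gen))) * (z' - σ pb.gen)
      = -(((2 * k + 3 : ℕ) : M) * (u - z')) * (z - σ pb.gen) ^ (2 * k + 2) := by
    intro σ
    have e1 : σ (aeval pb.gen (derivative (minpoly R pb.gen))) =
      ((derivative ((minpoly R pb.gen).map (algebraMap R M))).eval (σ pb.gen)) := by
      rw [derivative_map, eval_map_algebraMap, aeval_algHom_apply]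
    have e2 : ((minpoly R pb.gen).map (algebraMap R M)).eval (σ pb.gen) = 0 := by
      rw [eval_map_algebraMap, aeval_algHom_apply, minpoly.aeval, map_zero]
    rw [hF] at e1 e2
    generalize σ pb.gen = s at *
    have e3 := key_alg (2 * k + 2) z z' u s _ hz' ?_ ⟨k + 1, by ring⟩ (e1.trans ?_)
    · rw [e3]; push_cast; ring
    · simpa [hz'] using e2
    · simp [derivative_pow]
      left; ring
  have hp := Finset.prod_congr (rfl : (Finset.univ : Finset (E →ₐ[R] M)) = _) (fun σ _ => key σ)
  rw [Finset.prod_mul_distrib, Finset.prod_mul_distrib, Finset.prod_pow, prod_emb pb hs,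
    prod_emb pb hs, hF] at hp
  simp only [Finset.prod_const, Finset.card_univ, hcard] at hp
  generalize (∏ σ : E →ₐ[R] M, σ (aeval pb.gen (derivative (minpoly R pb.gen)))) = N at *
  have := fin_alg k z z' u N _ hzz hz' hu' (by simpa only [eval_mul, eval_C, eval_sub, eval_pow, eval_X] using hp)
  have a1 : (2 * k + 3) * (2 * k + 3 - 1) / 2 = (2 * k + 3) * (k + 1) := by
    apply Nat.div_eq_of_eq_mul_left (by norm_num)
    rw [show 2 * k + 3 - 1 = (k + 1) * 2 by omega]; ring
  have a2 : (2 * k + 3 - 1) * (2 * k + 3 - 2) / 2 = (k + 1) * (2 * k + 1) := by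
    apply Nat.div_eq_of_eq_mul_left (by norm_num)
    rw [show 2 * k + 3 - 1 = (k + 1) * 2 by omega, show 2 * k + 3 - 2 = 2 * k + 1 by omega]; ring
  rw [a1, a2, show 2 * k + 3 - 1 = 2 * k + 2 by omega, ← this]
  simp

theorem discr_main {R E M : Type*} [Field R] [Field E] [Algebra R E] [Field M] [IsAlgClosed M]
    [Algebra R M] (ℓ : ℕ) (hℓ : ℓ.Prime) (hodd : Odd ℓ) (hc : (ℓ : R) ≠ 0)
    (hdeg : Module.finrank R E = ℓ) (F : R[X]) (hm : F.Monic) (hd : F.natDegree = ℓ)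
    (hroot : ∀ r : R, F.eval r ≠ 0) (x : E) (hx : aeval x F = 0)
    (z z' u : M) (hzz : z * z' = 1) (hne : z ≠ z') (hu : u ≠ z')
    (hF : F.map (algebraMap R M) = C (z' - z)⁻¹ *
      (C (z' - u) * (X - C z) ^ ℓ - C (z - u) * (X - C z') ^ ℓ)) :
    algebraMap R M (Algebra.discr R (fun i : Fin ℓ => x ^ (i : ℕ))) =
      (ℓ : M) ^ ℓ * (4 - (z + z') ^ 2) ^ ((ℓ - 1) * (ℓ - 2) / 2) *
        (u ^ 2 - (z + z') * u + 1) ^ (ℓ - 1) := by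
  have : FiniteDimensional R E := Module.finite_of_finrank_pos (by rw [hdeg]; exact hℓ.pos)
  have hint : IsIntegral R x := IsIntegral.of_finite R x
  have hdvd := minpoly.degree_dvd hint
  rw [hdeg, Nat.dvd_prime hℓ] at hdvd
  have hnd : (minpoly R x).natDegree = ℓ := by
    rcases hdvd with h | h
    · exfalso
      obtain ⟨r, rfl⟩ := minpoly.natDegree_eq_one_iff.mp h
      rw [aeval_algebraMap_apply] at hx
      exact hroot r (by simpa using hx)
    · exact h
  have hmin : minpoly R x = F :=
    (eq_of_monic_of_dvd_of_natDegree_le (minpoly.monic hint) hm (minpoly.dvd R x hx) (by omega)).symm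
  have hsep : IsSeparable R x := by
    rw [IsSeparable, separable_iff_derivative_ne_zero (minpoly.irreducible hint), hmin]
    intro h0
    have := congrArg (fun p => coeff p (ℓ - 1)) h0
    have h1 := hℓ.pos
    simp only [coeff_derivative, coeff_zero] at this
    rw [Nat.sub_add_cancel h1, ← hd, hm.coeff_natDegree, hd, one_mul, ← Nat.cast_add_one,
      Nat.sub_add_cancel h1] at this
    exact hc this
  have htop := (Field.primitive_element_iff_minpoly_natDegree_eq R x).mpr (by rw [hnd, hdeg])
  have hS : Algebra.IsSeparable R E := by
    have h1 := (IntermediateField.isSeparable_adjoin_simple_iff_isSeparable R E).mpr hsep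
    rw [htop] at h1
    exact Algebra.IsSeparable.of_algHom R _ IntermediateField.topEquiv.symm.toAlgHom
  have htop' : Algebra.adjoin R {x} = ⊤ := by
    rw [← IntermediateField.adjoin_simple_toSubalgebra_of_isAlgebraic hint.isAlgebraic, htop,
      IntermediateField.top_toSubalgebra]
  let pb := PowerBasis.ofAdjoinEqTop hint htop'
  have hg : pb.gen = x := PowerBasis.ofAdjoinEqTop_gen hint htop'
  have hdim : pb.dim = ℓ := by rw [← hnd]; exact PowerBasis.ofAdjoinEqTop_dim hint htop'
  have := discr_pb pb ℓ hdim hodd hℓ.two_le z z' u hzz hne hu (by rw [hg, hmin, hF])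
  rwa [hg] at this
theorem no_root {L : Type*} [Field L] (K : Subfield L) (ℓ : ℕ) (hℓ2 : 2 ≤ ℓ) (z z' : L) (hne : z ≠ z')
    (F : K[X][X]) (hm : F.Monic)
    (hF : F.map (mapRingHom K.subtype) = C (C (z' - z)⁻¹) *
      (C (C z' - X) * (X - C (C z)) ^ ℓ - C (C z - X) * (X - C (C z')) ^ ℓ))
    (r : RatFunc K) : (F.map (algebraMap K[X] (RatFunc K))).eval r ≠ 0 := by
  intro h
  have hℓ : ℓ ≠ 0 := by omega
  obtain ⟨p, hp, -⟩ := exists_integer_of_is_root_of_monic hm (r := r) (by rwa [← eval_map_algebraMap])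
  rw [hp, eval_map_algebraMap, aeval_algebraMap_apply] at h
  have h1 : aeval p F = 0 := by
    simpa using h
  have h2 : (F.map (mapRingHom K.subtype)).eval (p.map K.subtype) = 0 := by
    have := congrArg (mapRingHom K.subtype) h1
    rw [map_zero, coe_aeval_eq_eval, ← eval_map_apply] at this
    simpa using this
  rw [hF] at h2
  set q : L[X] := p.map K.subtype
  have h3 : (C z' - X) * (q - C z) ^ ℓ = (C z - X) * (q - C z') ^ ℓ := by
    have hz : (C (z' - z)⁻¹ : L[X]) ≠ 0 := by
      simp [sub_eq_zero, hne.symm]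
    simp only [eval_mul, eval_C, eval_sub, eval_pow, eval_X] at h2
    exact sub_eq_zero.mp ((mul_eq_zero.mp h2).resolve_left hz)
  have h4 : q.eval z = z := by
    have := congrArg (eval z) h3
    simpa [sub_eq_zero, hne.symm, hℓ] using this
  obtain ⟨w, hw⟩ : X - C z ∣ q - C z := by
    rw [dvd_iff_isRoot]; simp [h4]
  obtain ⟨n, rfl⟩ := Nat.exists_eq_succ_of_ne_zero hℓ
  rw [hw, mul_pow] at h3
  have h5 : -((C z' - X) * (X - C z) ^ n * w ^ (n + 1)) = (q - C z') ^ (n + 1) := by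
    apply mul_left_cancel₀ (X_sub_C_ne_zero z)
    rw [Nat.succ_eq_add_one] at h3
    linear_combination (-1) * h3
  have h6 := congrArg (eval z) h5
  have hn : n ≠ 0 := by omega
  simp [h4, hn] at h6
  exact hne (sub_eq_zero.mp (pow_eq_zero_iff (by omega) |>.mp h6.symm))

theorem degs {L : Type*} [Field L] (K : Subfield L) (ℓ : ℕ) (z z' : L) (hne : z ≠ z')
    (P Q : K[X])
    (hP : P.map K.subtype =
      C (z' - z)⁻¹ * (C z' * (X - C z) ^ ℓ - C z * (X - C z') ^ ℓ))
    (hQ : Q.map K.subtype =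
      C (z' - z)⁻¹ * ((X - C z) ^ ℓ - (X - C z') ^ ℓ)) :
    P.Monic ∧ P.natDegree = ℓ ∧ Q.degree < (ℓ : WithBot ℕ) := by
  have hz : z' - z ≠ 0 := sub_ne_zero.mpr hne.symm
  have d1 : ∀ a : L, ((X - C a) ^ ℓ).degree = (ℓ : WithBot ℕ) := by intro a; simp
  have m1 : ∀ a : L, ((X - C a) ^ ℓ).Monic := fun a => (monic_X_sub_C a).pow ℓ
  have hQd : (Q.map K.subtype).degree < (ℓ : WithBot ℕ) := by
    rw [hQ, degree_C_mul (inv_ne_zero hz), ← d1 z]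
    exact degree_sub_lt_left (by rw [d1, d1]) (m1 z).ne_zero (by rw [m1 z, m1 z'])
  have hPe : P.map K.subtype = (X - C z) ^ ℓ + C z * Q.map K.subtype := by
    rw [hP, hQ]
    have : (C (z' - z)⁻¹ : L[X]) * (C z' - C z) = 1 := by
      rw [← C_sub, ← C_mul, inv_mul_cancel₀ hz, C_1]
    linear_combination (X - C z) ^ ℓ * this
  have hlt : (C z * Q.map K.subtype).degree < ((X - C z) ^ ℓ).degree := by
    rw [d1]
    refine lt_of_le_of_lt ?_ hQd
    rw [← smul_eq_C_mul]; exact degree_smul_le _ _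
  refine ⟨?_, ?_, ?_⟩
  · rw [← monic_map_iff (f := K.subtype), hPe]
    exact (m1 z).add_of_left hlt
  · rw [← natDegree_map K.subtype, hPe, natDegree_add_eq_left_of_degree_lt hlt]; simp
  · rwa [degree_map] at hQd

/-- Let `x` be a root of Rikuna's polynomial `F(X,u) = 𝒫(X) - u 𝒬(X)` in an extension `E`
of `K(u)` of degree `ℓ` (so `E = K(u)(x)`).  The discriminant of the power basis
`1, x, …, x^(ℓ-1)` of `E` over `K(u)` (i.e. the discriminant of `F(X,u)`) equals
`ℓ^ℓ (4 - ω²)^((ℓ-1)(ℓ-2)/2) (u² - ωu + 1)^(ℓ-1)`, where `ω = ζ + ζ⁻¹ ∈ K`. -/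
theorem stmt_2 (ℓ : ℕ) (hℓ : ℓ.Prime) (hodd : Odd ℓ)
    (L : Type*) [Field L] (hchar : (ℓ : L) ≠ 0)
    (K : Subfield L) (ζ : L) (hζ : IsPrimitiveRoot ζ ℓ) (hζK : ζ ∉ K)
    (ω : K) (hω : (ω : L) = ζ + ζ⁻¹)
    (P Q : Polynomial K)
    (hP : P.map K.subtype =
      C (ζ⁻¹ - ζ)⁻¹ * (C ζ⁻¹ * (X - C ζ) ^ ℓ - C ζ * (X - C ζ⁻¹) ^ ℓ))
    (hQ : Q.map K.subtype =
      C (ζ⁻¹ - ζ)⁻¹ * ((X - C ζ) ^ ℓ - (X - C ζ⁻¹) ^ ℓ))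
    (E : Type*) [Field E] [Algebra (RatFunc K) E]
    (hdeg : Module.finrank (RatFunc K) E = ℓ) (x : E)
    (hx : Polynomial.aeval x (P.map (algebraMap K (RatFunc K)) -
      C RatFunc.X * Q.map (algebraMap K (RatFunc K))) = 0) :
    Algebra.discr (RatFunc K) (fun i : Fin ℓ => x ^ (i : ℕ)) =
      (ℓ : RatFunc K) ^ ℓ *
        (4 - algebraMap K (RatFunc K) ω ^ 2) ^ ((ℓ - 1) * (ℓ - 2) / 2) *
        (RatFunc.X ^ 2 - algebraMap K (RatFunc K) ω * RatFunc.X + 1) ^ (ℓ - 1) := by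
  have hz0 : ζ ≠ 0 := hζ.ne_zero hℓ.ne_zero
  have hne : ζ ≠ ζ⁻¹ := by
    intro h
    have h2 : ζ ^ 2 = 1 := by
      rw [pow_two]; nth_rewrite 2 [h]; exact mul_inv_cancel₀ hz0
    have h3 := (Nat.dvd_prime Nat.prime_two).mp (hζ.dvd_of_pow_eq_one 2 h2)
    rcases h3 with h3 | h3
    · exact hℓ.one_lt.ne' h3
    · rw [h3] at hodd; exact absurd hodd (by decide)
  obtain ⟨hPm, hPd, hQd⟩ := degs K ℓ ζ ζ⁻¹ hne P Q hP hQ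
  -- the polynomial over `K[u]`
  set G : K[X][X] := P.map C - C X * Q.map C with hG
  have hlt : (C X * Q.map C : K[X][X]).degree < (P.map C : K[X][X]).degree := by
    rw [degree_map_eq_of_injective C_injective, degree_eq_natDegree hPm.ne_zero, hPd,
      degree_mul, degree_C X_ne_zero, zero_add, degree_map_eq_of_injective C_injective]
    exact hQd
  have hGm : G.Monic := (hPm.map C).sub_of_left hlt
  have hGd : G.natDegree = ℓ := by
    rw [hG, natDegree_eq_of_degree_eq (degree_sub_eq_left_of_degree_lt hlt),
      natDegree_map_eq_of_injective C_injective, hPd]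
  have hFG : P.map (algebraMap K (RatFunc K)) - C RatFunc.X * Q.map (algebraMap K (RatFunc K))
      = G.map (algebraMap K[X] (RatFunc K)) := by
    rw [hG, Polynomial.map_sub, Polynomial.map_mul, map_map, map_map, map_C, RatFunc.algebraMap_X]
    have : (algebraMap K[X] (RatFunc K)).comp C = algebraMap K (RatFunc K) := by
      ext a; simp
    rw [this]
  have hGL : G.map (mapRingHom K.subtype) = C (C (ζ⁻¹ - ζ)⁻¹) *
      (C (C ζ⁻¹ - X) * (X - C (C ζ)) ^ ℓ - C (C ζ - X) * (X - C (C ζ⁻¹)) ^ ℓ) := by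
    have hc : (mapRingHom K.subtype).comp C = (C : L →+* L[X]).comp K.subtype := by
      ext a; simp
    rw [hG, Polynomial.map_sub, Polynomial.map_mul, map_map, map_map, map_C, hc, ← map_map,
      ← map_map, hP, hQ]
    simp
    ring
  have hinj : Function.Injective (mapRingHom K.subtype) :=
    map_injective _ K.subtype.injective
  let φ : RatFunc K →+* RatFunc L := RatFunc.mapRingHom (mapRingHom K.subtype)
    (nonZeroDivisors_le_comap_nonZeroDivisors_of_injective _ hinj)
  let M := AlgebraicClosure (RatFunc L)
  let _ : Algebra (RatFunc K) M := ((algebraMap (RatFunc L) M).comp φ).toAlgebra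
  have hφ : ∀ p : K[X], φ (algebraMap _ _ p) = algebraMap _ _ (p.map K.subtype) := by
    intro p
    have h := RatFunc.map_apply_div (mapRingHom K.subtype)
      (nonZeroDivisors_le_comap_nonZeroDivisors_of_injective _ hinj) p 1
    simp only [map_one, div_one] at h
    exact h
  let ψ : L[X] →+* M := (algebraMap (RatFunc L) M).comp (algebraMap L[X] (RatFunc L))
  have hψ : Function.Injective ψ :=
    (algebraMap (RatFunc L) M).injective.comp (RatFunc.algebraMap_injective L)
  have hRM : (algebraMap (RatFunc K) M).comp (algebraMap K[X] (RatFunc K)) =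
      ψ.comp (mapRingHom K.subtype) := by
    refine RingHom.ext fun p => ?_
    exact congrArg (algebraMap (RatFunc L) M) (hφ p)
  have hRM' : ∀ p : K[X], algebraMap (RatFunc K) M (algebraMap K[X] (RatFunc K) p) =
      ψ (p.map K.subtype) := fun p => congrArg (fun f => f p) hRM
  have hcast : (ℓ : RatFunc K) ≠ 0 := by
    intro h
    have : algebraMap K (RatFunc K) (ℓ : K) = 0 := by simpa using h
    have h2 : (ℓ : K) = 0 := (map_eq_zero _).mp this
    exact hchar (by simpa using congrArg K.subtype h2)
  have main := discr_main (M := M) ℓ hℓ hodd hcast hdeg (G.map (algebraMap K[X] (RatFunc K)))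
    (hGm.map _) (by rw [hGm.natDegree_map, hGd])
    (no_root K ℓ hℓ.two_le ζ ζ⁻¹ hne G hGm hGL) x (by rw [← hFG]; exact hx)
    (ψ (C ζ)) (ψ (C ζ⁻¹)) (ψ X)
    (by rw [← map_mul, ← C_mul, mul_inv_cancel₀ hz0]; simp)
    (fun h => hne (C_injective (hψ h)))
    (fun h => X_ne_C _ (hψ h))
    (by
      rw [map_map, hRM, ← map_map, hGL]
      have : ψ (C (ζ⁻¹ - ζ)⁻¹) = (ψ (C ζ⁻¹) - ψ (C ζ))⁻¹ := by
        apply eq_inv_of_mul_eq_one_left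
        rw [← map_sub, ← map_mul, ← C_sub, ← C_mul, inv_mul_cancel₀ (sub_ne_zero.mpr hne.symm)]
        simp
      simp [-map_inv₀, this])
  apply (algebraMap (RatFunc K) M).injective
  rw [main]
  have hX : algebraMap (RatFunc K) M RatFunc.X = ψ X := by
    rw [← RatFunc.algebraMap_X, hRM', map_X]
  have hw : algebraMap (RatFunc K) M (algebraMap K (RatFunc K) ω) = ψ (C ζ) + ψ (C ζ⁻¹) := by
    have : algebraMap K (RatFunc K) ω = algebraMap K[X] (RatFunc K) (C ω) := by simp
    rw [this, hRM', map_C, ← map_add, ← C_add]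
    congr 2
  rw [map_mul, map_mul, map_pow, map_pow, map_pow, map_add, map_sub, map_sub, map_mul, map_pow,
    map_pow, hX, hw, map_natCast, map_one, map_ofNat]
end

section
/- Let ℓ be an odd prime, m > 1 an integer not divisible by ℓ, and m₀ the square-free part (radical) of m. There exists a bound B such that for every prime power q > B satisfying q ≡ −1 (mod ℓ) and q ≡ 1 (mod m₀), the following holds: if ζ denotes a primitive ℓ-th root of unity in the quadratic extension 𝔽_{q²} = 𝔽_q(ζ) of 𝔽_q, then there is a nonzero element γ ∈ 𝔽_q such that the polynomial X^m − (γ + ℓζ) is irreducible over 𝔽_q(ζ). -/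
open Polynomial IntermediateField in
/-- Irreducibility criterion for `X ^ n - a` over a field containing a square root of `-1`. -/
theorem irr_of_sq_neg_one {K : Type} [Field K] {n : ℕ} (hn : n ≠ 0) {i : K} (hi : i ^ 2 = -1)
    {a : K} (ha : ∀ p : ℕ, p.Prime → p ∣ n → ∀ b : K, b ^ p ≠ a) :
    Irreducible (X ^ n - C a) := by
  induction n using induction_on_primes generalizing K a with
  | zero => simp at hn
  | one => simpa using irreducible_X_sub_C a
  | prime_mul p n hp IH =>
    rw [mul_comm]
    apply X_pow_mul_sub_C_irreducible
      (X_pow_sub_C_irreducible_of_prime hp (ha p hp (dvd_mul_right _ _)))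
    intro E _ _ x hx
    have : IsIntegral K x := not_not.mp fun h ↦ by
      simpa only [degree_zero, degree_X_pow_sub_C hp.pos,
        WithBot.natCast_ne_bot] using congr_arg degree (hx.symm.trans (dif_neg h))
    apply IH (right_ne_zero_of_mul hn) (i := algebraMap K _ i) (by rw [← map_pow, hi]; simp)
    intro q hq hqn b hb
    have key : (Algebra.norm K b) ^ q = (-1) ^ p * (-a) := by
      rw [← map_pow, hb, ← adjoin.powerBasis_gen this,
        Algebra.PowerBasis.norm_gen_eq_coeff_zero_minpoly]
      simp [minpoly_gen, hx, hp.ne_zero.symm]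
    have hA := ha q hq (dvd_mul_of_dvd_right hqn p)
    rcases hp.eq_two_or_odd' with rfl | hpo
    · rcases hq.eq_two_or_odd' with rfl | hqo
      · apply hA (i * Algebra.norm K b)
        rw [mul_pow, key, hi]; ring
      · apply hA (- Algebra.norm K b)
        rw [hqo.neg_pow, key]; ring
    · apply hA (Algebra.norm K b)
      rw [key, hpo.neg_one_pow]; ring

open Finset in
/-- An elementary second moment argument: some `γ ≠ 0` has `(γ + θ) ^ k = ω`. -/
theorem exists_shift {F E : Type} [Field F] [Field E] [Algebra F E] [Fintype F] [Fintype E]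
    (q n k : ℕ) (hF : Fintype.card F = q) (hE : Fintype.card E = q ^ 2)
    (hn : 0 < n) (hk : n * k + 1 = q ^ 2) (hq : n ^ 2 + 2 * n < q)
    (θ : E) (hθ : ∀ γ : F, algebraMap F E γ ≠ θ) (ω : E) (hω : ω ^ n = 1) :
    ∃ γ : F, γ ≠ 0 ∧ (algebraMap F E γ + θ) ^ k = ω := by
  classical
  have hk0 : 0 < k := by
    rcases Nat.eq_zero_or_pos k with rfl | h
    · nlinarith
    · exact h
  have hne : ∀ γ : F, algebraMap F E γ + θ ≠ 0 := by
    intro γ h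
    apply hθ (-γ)
    rw [map_neg]; linear_combination -h
  set Φ : F → E := fun γ => (algebraMap F E γ + θ) ^ k with hΦ
  set T : Finset E := Polynomial.nthRootsFinset n (1 : E) with hT
  have hTm : ∀ γ, Φ γ ∈ T := by
    intro γ
    rw [hT, Polynomial.mem_nthRootsFinset hn, hΦ]
    simp only
    rw [← pow_mul, mul_comm k n, show n * k = Fintype.card E - 1 by omega]
    exact FiniteField.pow_card_sub_one_eq_one _ (hne γ)
  have hωT : ω ∈ T := by rw [hT, Polynomial.mem_nthRootsFinset hn]; exact hω
  have hTc : #T ≤ n := by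
    rw [hT, Polynomial.nthRootsFinset_def]
    exact (Multiset.toFinset_card_le _).trans (Polynomial.card_nthRoots _ _)
  set N : E → ℕ := fun c => #{γ : F | Φ γ = c} with hN
  have h1 : ∑ c ∈ T, N c = q := by
    rw [← hF, ← card_univ]
    exact (card_eq_sum_card_fiberwise (fun γ _ => hTm γ)).symm
  have h2 : ∑ c ∈ T, N c ^ 2 ≤ q + k := by
    have e1 : ∑ c ∈ T, N c ^ 2 = #{x : F × F | Φ x.1 = Φ x.2} := by
      rw [card_eq_sum_card_fiberwise (f := fun x : F × F => Φ x.1) (t := T) (fun x _ => hTm x.1)]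
      refine sum_congr rfl fun c _ => ?_
      rw [hN, sq, ← card_product]
      congr 1
      ext ⟨x, y⟩
      simp only [mem_product, mem_filter, mem_univ, true_and]
      constructor
      · rintro ⟨h, h'⟩; exact ⟨h.trans h'.symm, h⟩
      · rintro ⟨h, h'⟩; exact ⟨h', h.symm.trans h'⟩
    rw [e1, ← card_filter_add_card_filter_not (fun x : F × F => x.1 = x.2)]
    apply Nat.add_le_add
    · rw [← hF, ← card_univ]
      apply card_le_card_of_injOn (fun x => x.1) (fun _ _ => mem_univ _)
      rintro ⟨a, b⟩ h ⟨c, d⟩ h' e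
      simp at h h' e
      simp [← h.2, ← h'.2, e]
    · have hR : #(Polynomial.nthRootsFinset k (1 : E)) ≤ k := by
        rw [Polynomial.nthRootsFinset_def]
        exact (Multiset.toFinset_card_le _).trans (Polynomial.card_nthRoots _ _)
      refine le_trans ?_ hR
      apply card_le_card_of_injOn
        (fun x => (algebraMap F E x.1 + θ) / (algebraMap F E x.2 + θ))
      · rintro ⟨a, b⟩ h
        simp only [coe_filter, mem_filter, mem_univ, true_and, Set.mem_ofPred_eq] at h
        simp only [mem_coe]
        rw [Polynomial.mem_nthRootsFinset hk0, div_pow]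
        exact (div_eq_one_iff_eq (pow_ne_zero _ (hne b))).2 h.1
      · rintro ⟨a, b⟩ h ⟨c, d⟩ h' e
        simp only [coe_filter, mem_filter, mem_univ, true_and, Set.mem_ofPred_eq] at h h' e
        have e' := (div_eq_div_iff (hne b) (hne d)).1 e
        -- `(a + θ)(d + θ) = (c + θ)(b + θ)`
        set A := algebraMap F E
        have hs : A (a + d - c - b) * θ = A (c * b - a * d) := by
          simp only [map_sub, map_add, map_mul]
          linear_combination e'
        have hz : a + d - c - b = 0 := by
          by_contra hz
          apply hθ ((c * b - a * d) / (a + d - c - b))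
          have hz' : A (a + d - c - b) ≠ 0 := (map_ne_zero A).2 hz
          rw [map_div₀, div_eq_iff hz', ← hs, mul_comm]
        have hy : c * b - a * d = 0 := by
          rw [hz, map_zero, zero_mul] at hs
          exact (map_eq_zero A).1 hs.symm
        have hab : a - b ≠ 0 := sub_ne_zero.2 h.2
        have hbd : (a - b) * (b - d) = 0 := by
          linear_combination hy + b * hz
        have hbd' : b = d := by
          rcases mul_eq_zero.1 hbd with h | h
          · exact absurd h hab
          · exact sub_eq_zero.1 h
        have hac : a = c := by linear_combination hz + hbd'
        rw [hac, hbd']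
  by_contra hcon
  push Not at hcon
  have hN1 : N ω ≤ 1 := by
    rw [hN]
    apply card_le_one.2
    intro a ha b hb
    simp only [mem_filter, mem_univ, true_and] at ha hb
    have ha0 : a = 0 := by by_contra h; exact hcon a h ha
    have hb0 : b = 0 := by by_contra h; exact hcon b h hb
    rw [ha0, hb0]
  have h1' : ∑ c ∈ T, (N c : ℤ) = q := by exact_mod_cast h1
  have h2' : ∑ c ∈ T, (N c : ℤ) ^ 2 ≤ q + k := by exact_mod_cast h2
  have hsum : ∑ c ∈ T, ((n : ℤ) * N c - q) ^ 2
      = n ^ 2 * ∑ c ∈ T, (N c : ℤ) ^ 2 - 2 * n * q * ∑ c ∈ T, (N c : ℤ) + #T * q ^ 2 := by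
    rw [mul_sum, mul_sum, ← nsmul_eq_mul, ← sum_const, ← sum_sub_distrib, ← sum_add_distrib]
    exact sum_congr rfl fun c _ => by ring
  have hle : ((n : ℤ) * N ω - q) ^ 2 ≤ ∑ c ∈ T, ((n : ℤ) * N c - q) ^ 2 :=
    single_le_sum (f := fun c => ((n : ℤ) * N c - q) ^ 2) (fun c _ => sq_nonneg _) hωT
  rw [hsum, h1'] at hle
  have hk' : (n : ℤ) * k + 1 = q ^ 2 := by exact_mod_cast hk
  have hq' : (n : ℤ) ^ 2 + 2 * n < q := by exact_mod_cast hq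
  have hTc' : (#T : ℤ) * q ^ 2 ≤ n * q ^ 2 := by
    have : (#T : ℤ) ≤ n := by exact_mod_cast hTc
    gcongr
  have hn' : (0 : ℤ) < n := by exact_mod_cast hn
  have hN' : (n : ℤ) * N ω ≤ n := by
    have : (N ω : ℤ) ≤ 1 := by exact_mod_cast hN1
    nlinarith
  have hb : (q - n : ℤ) ^ 2 ≤ ((n : ℤ) * N ω - q) ^ 2 := by
    rw [← neg_sq ((n : ℤ) * N ω - q)]
    apply pow_le_pow_left₀ <;> nlinarith
  have hc : (n : ℤ) ^ 2 * ∑ c ∈ T, (N c : ℤ) ^ 2 ≤ n ^ 2 * (q + k) := by gcongr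
  have hd : (q - n : ℤ) ^ 2 ≤ n ^ 2 * q - n := by
    have : (n : ℤ) ^ 2 * (q + k) - 2 * n * q * q + n * q ^ 2 = n ^ 2 * q - n := by
      linear_combination n * hk'
    linarith
  nlinarith [mul_pos (show (0 : ℤ) < q by nlinarith) (sub_pos.2 hq'), sq_nonneg (n : ℤ)]

/-- Let `ℓ` be an odd prime, `m > 1` an integer not divisible by `ℓ`, and `m₀` the radical
of `m`.  There is a bound `B` such that for every odd prime power `q > B` with
`q ≡ -1 (mod ℓ)` and `q ≡ 1 (mod m₀)`, and every primitive `ℓ`-th root of unity `ζ` in the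
quadratic extension `𝔽_{q²} = 𝔽_q(ζ)` of `𝔽_q`, there is a nonzero `γ ∈ 𝔽_q` such that
`X^m - (γ + ℓζ)` is irreducible over `𝔽_q(ζ)`. -/
theorem stmt_5 (ℓ : ℕ) (hℓ : ℓ.Prime) (hodd : Odd ℓ) (m : ℕ) (hm : 1 < m) (hℓm : ¬ ℓ ∣ m) :
    ∃ B : ℕ, ∀ q : ℕ, B < q → Odd q → IsPrimePow q →
      ℓ ∣ q + 1 → (∏ p ∈ m.primeFactors, p) ∣ q - 1 →
      ∀ (F E : Type) [Field F] [Field E] [Algebra F E] [Fintype F] [Fintype E],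
        Fintype.card F = q → Fintype.card E = q ^ 2 →
        ∀ ζ : E, IsPrimitiveRoot ζ ℓ →
          ∃ γ : F, γ ≠ 0 ∧
            Irreducible (Polynomial.X ^ m -
              Polynomial.C (algebraMap F E γ + (ℓ : E) * ζ)) := by
  have hm0 : m ≠ 0 := by omega
  set n := ∏ p ∈ m.primeFactors, p with hn_def
  have hn : 0 < n := Finset.prod_pos fun p hp => (Nat.prime_of_mem_primeFactors hp).pos
  refine ⟨n ^ 2 + 2 * n, ?_⟩
  intro q hq hqodd hqpp hlq hnq F E _ _ _ _ _ hF hE ζ hζ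
  have hq1 : 1 ≤ q := by omega
  obtain ⟨k, hk⟩ : n ∣ q ^ 2 - 1 := by
    have h : q ^ 2 - 1 = (q + 1) * (q - 1) := by
      simpa using Nat.sq_sub_sq q 1
    rw [h]; exact hnq.mul_left _
  have hk1 : n * k + 1 = q ^ 2 := by
    have : 1 ≤ q ^ 2 := Nat.one_le_pow _ _ hq1
    omega
  -- `ℓ` is nonzero in `E`
  have hq0 : (q : E) = 0 := by
    have h : ((q ^ 2 : ℕ) : E) = 0 := by rw [← hE]; exact FiniteField.cast_card_eq_zero E
    rw [Nat.cast_pow] at h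
    exact pow_eq_zero_iff (two_ne_zero) |>.1 h
  have hl0 : (ℓ : E) ≠ 0 := by
    intro h
    obtain ⟨c, hc⟩ := hlq
    have h' : ((q + 1 : ℕ) : E) = 0 := by rw [hc]; push_cast; rw [h, zero_mul]
    push_cast at h'
    rw [hq0, zero_add] at h'
    exact one_ne_zero h'
  have hθ : ∀ γ : F, algebraMap F E γ ≠ (ℓ : E) * ζ := by
    intro γ hγ
    have hlF : algebraMap F E (ℓ : F) = (ℓ : E) := map_natCast _ _
    have hz : algebraMap F E (γ / ℓ) = ζ := by
      rw [map_div₀, hlF, hγ, mul_div_cancel_left₀ _ hl0]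
    have hz1 : ζ ^ (q - 1) = 1 := by
      have hne : γ / (ℓ : F) ≠ 0 := by
        intro h
        rw [h, map_zero] at hz
        exact hζ.ne_zero hℓ.ne_zero hz.symm
      rw [← hz, ← map_pow, ← hF, FiniteField.pow_card_sub_one_eq_one _ hne, map_one]
    have hd := hζ.dvd_of_pow_eq_one _ hz1
    have h2 : ℓ ∣ 2 := by
      have := Nat.dvd_sub hlq hd
      rwa [show q + 1 - (q - 1) = 2 by omega] at this
    have := (Nat.prime_dvd_prime_iff_eq hℓ Nat.prime_two).1 h2
    subst this
    exact absurd hodd (by decide)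
  -- a primitive `n`-th root of unity
  obtain ⟨g, hg⟩ := IsCyclic.exists_ofOrder_eq_natCard (α := Eˣ)
  have hgo : orderOf g = n * k := by
    rw [hg, Nat.card_units, Nat.card_eq_fintype_card, hE, hk]
  have hk0 : 0 < k := by
    rcases Nat.eq_zero_or_pos k with rfl | h
    · nlinarith
    · exact h
  have hω : IsPrimitiveRoot ((g : E) ^ k) n := by
    have h1 : IsPrimitiveRoot g (n * k) := hgo ▸ IsPrimitiveRoot.orderOf g
    have h2 : IsPrimitiveRoot (g : E) (n * k) := IsPrimitiveRoot.coe_units_iff.2 h1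
    exact h2.pow (Nat.mul_pos hn hk0) (mul_comm _ _)
  obtain ⟨γ, hγ0, hγ⟩ := exists_shift q n k hF hE hn hk1 hq ((ℓ : E) * ζ) hθ _ hω.pow_eq_one
  refine ⟨γ, hγ0, ?_⟩
  obtain ⟨i, hi⟩ : IsSquare (-1 : E) := by
    rw [FiniteField.isSquare_neg_one_iff, hE]
    obtain ⟨c, rfl⟩ := hqodd
    have : (2 * c + 1) ^ 2 = 4 * (c * c + c) + 1 := by ring
    omega
  apply irr_of_sq_neg_one hm0 (i := i) (by rw [hi, sq])
  intro p hp hpm b hb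
  obtain ⟨d, hd⟩ : p ∣ n := Finset.dvd_prod_of_mem _ (hp.mem_primeFactors hpm hm0)
  have hb0 : b ≠ 0 := by
    rintro rfl
    rw [zero_pow hp.ne_zero] at hb
    rw [← hb, zero_pow hk0.ne'] at hγ
    exact hω.ne_zero hn.ne' hγ.symm
  have h1 : ((g : E) ^ k) ^ d = 1 := by
    rw [← hγ, ← hb, ← pow_mul, ← pow_mul, show p * (k * d) = Fintype.card E - 1 by
      rw [hE, hk, hd]; ring]
    exact FiniteField.pow_card_sub_one_eq_one _ hb0
  have h2 := Nat.le_of_dvd (by rcases Nat.eq_zero_or_pos d with rfl | h <;> omega)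
    (hω.dvd_of_pow_eq_one _ h1)
  have := hp.two_le
  have hd0 : 0 < d := by rcases Nat.eq_zero_or_pos d with rfl | h <;> omega
  nlinarith
end

section
/- Let q be an odd prime power, d a nonzero element of 𝔽_q, and k ≥ 2 an integer dividing q − 1. Let N_k denote the number of pairs (α, β) ∈ 𝔽_q × 𝔽_q with β² + d = α^k. Then |N_k − q| < k·√q. -/
open Finset

lemma aux_jac {F : Type*} [Field F] [Fintype F] (χ φ : MulChar F ℂ) (hχ : χ ≠ 1) (hφ : φ ≠ 1) :
    ‖jacobiSum χ φ‖ ≤ Real.sqrt (Fintype.card F) := by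
  by_cases h : χ * φ = 1
  · obtain rfl : φ = χ⁻¹ := (inv_eq_of_mul_eq_one_right h).symm
    rw [jacobiSum_nontrivial_inv hχ, norm_neg]
    have h1 : χ (-1) ^ 2 = 1 := by rw [← map_pow]; simp
    have h2 : ‖χ (-1)‖ = 1 := by
      rw [← pow_eq_one_iff_of_nonneg (norm_nonneg _) two_ne_zero, ← norm_pow, h1, norm_one]
    rw [h2, Real.one_le_sqrt]
    exact_mod_cast Fintype.card_pos
  · have hc : ringChar ℂ ≠ ringChar F := by
      rw [ringChar.eq_zero]
      exact (CharP.ringChar_ne_zero_of_finite F).symm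
    have := jacobiSum_mul_jacobiSum_inv hc hχ hφ h
    have hs : jacobiSum χ⁻¹ φ⁻¹ = (starRingEnd ℂ) (jacobiSum χ φ) := by
      simp only [jacobiSum, map_sum, map_mul, starRingEnd_apply, MulChar.star_apply']
    rw [hs, Complex.mul_conj, Complex.normSq_eq_norm_sq] at this
    apply Real.le_sqrt_of_sq_le
    exact le_of_eq (by exact_mod_cast this)

lemma aux_count {F : Type*} [Field F] [Fintype F] [DecidableEq F] (k : ℕ) (hk : 2 ≤ k)
    (χ : MulChar F ℂ) (hχ : orderOf χ = k) (u : F) :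
    ((#{a : F | a ^ k = u} : ℕ) : ℂ) = 1 + ∑ j ∈ Ico 1 k, (χ ^ j) u := by
  have hk0 : k ≠ 0 := by omega
  rcases eq_or_ne u 0 with rfl | hu
  · have : ({a : F | a ^ k = 0} : Finset F) = {0} := by ext; simp [hk0]
    rw [this]; simp [MulChar.map_zero]
  have hsum : 1 + ∑ j ∈ Ico 1 k, (χ ^ j) u = ∑ j ∈ range k, (χ u) ^ j := by
    rw [Finset.range_eq_Ico, Finset.sum_eq_sum_Ico_succ_bot (by omega : 0 < k) (fun j => (χ u) ^ j), pow_zero]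
    congr 1
    refine Finset.sum_congr rfl fun j hj => ?_
    rw [MulChar.pow_apply' _ (by have := (mem_Ico.1 hj).1; omega)]
  rw [hsum]
  obtain ⟨g, hg⟩ := IsCyclic.exists_generator (α := Fˣ)
  have hord : ∀ m : ℕ, (χ g) ^ m = 1 ↔ k ∣ m := by
    intro m
    rw [← hχ, orderOf_dvd_iff_pow_eq_one, MulChar.eq_iff hg, MulChar.pow_apply_coe, MulChar.one_apply_coe]
  have hkd : k ∣ Fintype.card Fˣ := by
    rw [← hord, ← map_pow, ← Units.val_pow_eq_pow_val, pow_card_eq_one]; simp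
  have hprim : ∃ ζ : F, IsPrimitiveRoot ζ k := by
    obtain ⟨c, hc⟩ := hkd
    have : IsPrimitiveRoot g (Fintype.card Fˣ) := by
      have := IsPrimitiveRoot.orderOf g
      rwa [orderOf_eq_card_of_forall_mem_zpowers hg, Nat.card_eq_fintype_card] at this
    exact ⟨_, ((IsPrimitiveRoot.coe_units_iff).2 (this.pow Fintype.card_pos (by rw [hc, mul_comm])))⟩
  obtain ⟨ζ, hζ⟩ := hprim
  have hcard : #{a : F | a ^ k = u} = if ∃ α, α ^ k = u then k else 0 := by
    refine Eq.trans ?_ ((hζ.card_nthRoots u).trans (by congr))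
    rw [← Multiset.toFinset_card_of_nodup (hζ.nthRoots_nodup hu)]
    congr 1
    ext a
    simp [Polynomial.mem_nthRoots (by omega : 0 < k)]
  have hiff : (∃ α, α ^ k = u) ↔ χ u = 1 := by
    constructor
    · rintro ⟨α, rfl⟩
      have : α ≠ 0 := by rintro rfl; simp [hk0] at hu
      rw [map_pow, ← MulChar.pow_apply' _ hk0, ← hχ, pow_orderOf_eq_one, MulChar.one_apply this.isUnit]
    · intro h
      obtain ⟨m, hm⟩ := (mem_powers_iff_mem_zpowers.2 (hg (Units.mk0 u hu)))
      have hm' : (g : F) ^ m = u := by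
        have := congrArg Units.val hm
        simpa using this
      rw [← hm', map_pow, hord] at h
      obtain ⟨c, rfl⟩ := h
      exact ⟨(g : F) ^ c, by rw [← hm', ← pow_mul, mul_comm]⟩
  rw [hcard]
  by_cases h : χ u = 1
  · rw [if_pos (hiff.2 h)]; simp [h]
  · rw [if_neg (fun h' => h (hiff.1 h')), geom_sum_eq h, ← MulChar.pow_apply' _ hk0, ← hχ, pow_orderOf_eq_one, MulChar.one_apply hu.isUnit]
    simp

theorem stmt_7 (q : ℕ) (hqodd : Odd q) (hq : IsPrimePow q)
    (F : Type*) [Field F] [Fintype F] (hcard : Fintype.card F = q)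
    (d : F) (hd : d ≠ 0) (k : ℕ) (hk : 2 ≤ k) (hkq : k ∣ q - 1) :
    |(Nat.card {p : F × F // p.2 ^ 2 + d = p.1 ^ k} : ℝ) - (q : ℝ)| <
      (k : ℝ) * Real.sqrt q := by
  classical
  subst hcard
  have hF : ringChar F ≠ 2 := by
    intro h
    have := FiniteField.even_card_iff_char_two.1 h
    rw [Nat.odd_iff] at hqodd; omega
  obtain ⟨χ, hχ⟩ := MulChar.exists_mulChar_orderOf F hkq
    (Complex.isPrimitiveRoot_exp k (by omega))
  set η : MulChar F ℂ := (quadraticChar F).ringHomComp (Int.castRingHom ℂ) with hη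
  have hη1 : η ≠ 1 := by
    rw [hη]
    exact (MulChar.ringHomComp_ne_one_iff (RingHom.injective_int _)).2 (quadraticChar_ne_one hF)
  have hsq : ∀ a : F, ((#{b : F | b ^ 2 = a} : ℕ) : ℂ) = η a + 1 := by
    intro a
    have := quadraticChar_card_sqrts hF a
    have h2 : ({b : F | b ^ 2 = a} : Set F).toFinset = ({b : F | b ^ 2 = a} : Finset F) := by
      ext; simp
    rw [h2] at this
    have h3 := congrArg (Int.cast : ℤ → ℂ) this
    simpa [hη] using h3
  have hN : ((Nat.card {p : F × F // p.2 ^ 2 + d = p.1 ^ k} : ℕ) : ℂ)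
      = ∑ a : F, (η (a ^ k - d) + 1) := by
    rw [Nat.card_eq_fintype_card, Fintype.card_subtype, Finset.card_filter, Fintype.sum_prod_type]
    push_cast
    refine Finset.sum_congr rfl fun a _ => ?_
    rw [← hsq, Finset.card_filter]
    push_cast
    refine Finset.sum_congr rfl fun b _ => ?_
    simp [eq_sub_iff_add_eq]
  have hS : ∑ a : F, η (a ^ k - d) = ∑ j ∈ Ico 1 k, (χ ^ j) d * η (-d) * jacobiSum (χ ^ j) η := by
    have h1 : ∑ a : F, η (a ^ k - d) = ∑ u : F, ((#{a : F | a ^ k = u} : ℕ) : ℂ) * η (u - d) := by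
      rw [← Finset.sum_fiberwise (s := univ) (g := fun a : F => a ^ k)]
      refine Finset.sum_congr rfl fun u _ => ?_
      rw [Finset.sum_congr rfl (g := fun _ => η (u - d)), Finset.sum_const, nsmul_eq_mul]
      intro a ha
      rw [(mem_filter.1 ha).2]
    have h0 : ∑ u : F, η (u - d) = 0 := by
      rw [← MulChar.sum_eq_zero_of_ne_one hη1]
      exact (Equiv.subRight d).sum_comp (fun x => η x)
    simp_rw [h1, aux_count k hk χ hχ, add_mul, one_mul, Finset.sum_add_distrib, h0, zero_add, Finset.sum_mul]
    rw [Finset.sum_comm]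
    refine Finset.sum_congr rfl fun j _ => ?_
    rw [jacobiSum, Finset.mul_sum, ← Equiv.sum_comp (Equiv.mulLeft₀ d hd)]
    refine Finset.sum_congr rfl fun v _ => ?_
    have : d * v - d = -d * (1 - v) := by ring
    change (χ ^ j) (d * v) * η (d * v - d) = _
    rw [this, map_mul, map_mul]
    ring
  have hnorm : ∀ (ψ : MulChar F ℂ) (x : F), ‖ψ x‖ ≤ 1 := by
    intro ψ x
    rcases eq_or_ne x 0 with rfl | hx
    · simp [MulChar.map_zero]
    · obtain ⟨ζ, hζ, h⟩ := ψ.apply_mem_rootsOfUnity_orderOf hx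
      have : NeZero (orderOf ψ) := ⟨ψ.orderOf_pos.ne'⟩
      rw [← h]
      exact (Complex.norm_eq_one_of_mem_rootsOfUnity hζ).le
  have key : ‖∑ a : F, η (a ^ k - d)‖ ≤ (k - 1 : ℕ) * Real.sqrt (Fintype.card F) := by
    rw [hS]
    refine (norm_sum_le_of_le _ (f := fun j => (χ ^ j) d * η (-d) * jacobiSum (χ ^ j) η) (n := fun _ => Real.sqrt (Fintype.card F)) ?_).trans ?_
    · intro j hj
      rw [mem_Ico] at hj
      have hj1 : χ ^ j ≠ 1 := pow_ne_one_of_lt_orderOf (by omega) (by omega)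
      have := aux_jac _ _ hj1 hη1
      rw [norm_mul, norm_mul]
      calc _ ≤ 1 * 1 * Real.sqrt (Fintype.card F) := by
            gcongr
            · exact hnorm _ _
            · exact hnorm _ _
        _ = _ := by ring
    · simp
  have hcast : ((|(Nat.card {p : F × F // p.2 ^ 2 + d = p.1 ^ k} : ℝ) - (Fintype.card F : ℝ)|) : ℝ)
      = ‖∑ a : F, η (a ^ k - d)‖ := by
    rw [← Real.norm_eq_abs, ← Complex.norm_real]
    congr 1
    push_cast
    rw [hN, Finset.sum_add_distrib]
    simp
  rw [hcast]
  refine key.trans_lt ?_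
  have : 0 < Real.sqrt (Fintype.card F) := Real.sqrt_pos.2 (by exact_mod_cast Fintype.card_pos)
  gcongr
  omega
end

section
/- Let q be an odd prime power and ℓ an odd prime not dividing q with q ≡ −1 (mod ℓ), let ζ be a primitive ℓ-th root of unity in the quadratic extension 𝔽_{q²} of 𝔽_q, and let ω = ζ + ζ^{-1} ∈ 𝔽_q. Let 𝒫, 𝒬 ∈ 𝔽_q[X] be the Rikuna polynomials and r = 𝒫/𝒬 the associated rational function, and define X₀ = T and X_j = r(X_{j−1}) ∈ 𝔽_q(T) for j ≥ 1. Let m > 1 be an integer and γ ∈ 𝔽_q such that X^m − (γ + ℓζ) is irreducible over 𝔽_{q²}. Then for every n ≥ 0 the polynomial Y^m − (ℓ·X_n + γ) is irreducible over the rational function field 𝔽_q(T). -/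
open Polynomial

/-- The local ring of `F(T)` at the place `T = ζ`, with its evaluation map. -/
theorem exists_local_ring {F E : Type*} [Field F] [Field E] [Algebra F E] (ζ : E) :
    ∃ (R : Subalgebra F[X] (RatFunc F)) (φ : R →+* E), IsIntegrallyClosed R ∧
      IsFractionRing R (RatFunc F) ∧
      (∀ p : F[X], φ (algebraMap F[X] R p) = aeval ζ p) ∧
      (∀ y : R, φ y ≠ 0 → IsUnit y) := by
  let I : Ideal F[X] := RingHom.ker (aeval ζ : F[X] →ₐ[F] E)
  have : I.IsPrime := RingHom.ker_isPrime _
  have hS : I.primeCompl ≤ nonZeroDivisors F[X] := I.primeCompl_le_nonZeroDivisors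
  let R := Localization.subalgebra.ofField (RatFunc F) I.primeCompl hS
  have hu : ∀ y : I.primeCompl, IsUnit ((aeval ζ : F[X] →ₐ[F] E).toRingHom y) := by
    intro y
    rw [isUnit_iff_ne_zero]
    intro h
    exact y.2 h
  let φ : R →+* E := IsLocalization.lift (M := I.primeCompl) hu
  have hφ : ∀ p : F[X], φ (algebraMap F[X] R p) = aeval ζ p := fun p =>
    IsLocalization.lift_eq (M := I.primeCompl) hu p
  refine ⟨R, φ, isIntegrallyClosed_of_isLocalization R I.primeCompl hS, inferInstance,
    hφ, ?_⟩
  intro y hy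
  obtain ⟨⟨a, s⟩, h⟩ := IsLocalization.surj I.primeCompl y
  have hs : IsUnit (algebraMap F[X] R s) := IsLocalization.map_units R s
  have ha : a ∈ I.primeCompl := by
    intro ha
    have ha' : aeval ζ a = 0 := ha
    have := congrArg φ h
    simp only [map_mul, hφ, ha'] at this
    rcases mul_eq_zero.1 this with h1 | h1
    · exact hy h1
    · exact s.2 h1
  have := IsLocalization.map_units R (⟨a, ha⟩ : I.primeCompl)
  rw [← h] at this
  exact isUnit_of_mul_isUnit_left this

/-- Let `q` be an odd prime power, `ℓ` an odd prime with `ℓ ∤ q` and `q ≡ -1 (mod ℓ)`,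
`ζ` a primitive `ℓ`-th root of unity in the quadratic extension `E = 𝔽_{q²}` of `F = 𝔽_q`,
and `ω = ζ + ζ⁻¹ ∈ 𝔽_q`.  Let `P, Q ∈ 𝔽_q[X]` be the Rikuna polynomials (their images in
`E[X]` are `𝒫(X) = (ζ⁻¹ - ζ)⁻¹ (ζ⁻¹(X - ζ)^ℓ - ζ(X - ζ⁻¹)^ℓ)` and
`𝒬(X) = (ζ⁻¹ - ζ)⁻¹ ((X - ζ)^ℓ - (X - ζ⁻¹)^ℓ)`), and define `X₀ = T` and
`X_j = P(X_{j-1})/Q(X_{j-1}) ∈ 𝔽_q(T)`.  If `γ ∈ 𝔽_q` is such that `X^m - (γ + ℓζ)` is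
irreducible over `𝔽_{q²}` (with `m > 1`), then for every `n ≥ 0` the polynomial
`Y^m - (ℓ X_n + γ)` is irreducible over `𝔽_q(T)`. -/
theorem stmt_17 (q ℓ : ℕ) (hqodd : Odd q) (hq : IsPrimePow q)
    (hℓ : ℓ.Prime) (hℓodd : Odd ℓ) (hℓq : ¬ ℓ ∣ q) (hcong : ℓ ∣ q + 1)
    (F E : Type*) [Field F] [Field E] [Algebra F E] [Fintype F] [Fintype E]
    (hcardF : Fintype.card F = q) (hcardE : Fintype.card E = q ^ 2)
    (ζ : E) (hζ : IsPrimitiveRoot ζ ℓ)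
    (ω : F) (hω : algebraMap F E ω = ζ + ζ⁻¹)
    (P Q : Polynomial F)
    (hP : P.map (algebraMap F E) =
      C (ζ⁻¹ - ζ)⁻¹ * (C ζ⁻¹ * (X - C ζ) ^ ℓ - C ζ * (X - C ζ⁻¹) ^ ℓ))
    (hQ : Q.map (algebraMap F E) =
      C (ζ⁻¹ - ζ)⁻¹ * ((X - C ζ) ^ ℓ - (X - C ζ⁻¹) ^ ℓ))
    (Xs : ℕ → RatFunc F) (hX0 : Xs 0 = RatFunc.X)
    (hXs : ∀ j : ℕ, Xs (j + 1) = Polynomial.aeval (Xs j) P / Polynomial.aeval (Xs j) Q)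
    (m : ℕ) (hm : 1 < m) (γ : F)
    (hirr : Irreducible (X ^ m - C (algebraMap F E γ + (ℓ : E) * ζ) : Polynomial E)) :
    ∀ n : ℕ, Irreducible (X ^ m -
      C ((ℓ : RatFunc F) * Xs n + algebraMap F (RatFunc F) γ) : Polynomial (RatFunc F)) := by
  obtain ⟨R, φ, hic, hfr, hφ, hun⟩ := exists_local_ring (F := F) ζ
  have hζ0 : ζ ≠ 0 := hζ.ne_zero hℓ.ne_zero
  have hd : ζ⁻¹ - ζ ≠ 0 := by
    intro h
    have h2 : ζ ^ 2 = 1 := by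
      have h3 : ζ⁻¹ = ζ := sub_eq_zero.1 h
      rw [pow_two]
      nth_rewrite 1 [← h3]
      exact inv_mul_cancel₀ hζ0
    have h4 := Nat.le_of_dvd (by norm_num) (hζ.dvd_of_pow_eq_one 2 h2)
    have h5 := hℓ.two_le
    have h6 : ℓ = 2 := by omega
    rw [h6] at hℓodd
    exact absurd hℓodd (by decide)
  have hd' : (ζ - ζ⁻¹) ^ ℓ ≠ 0 := pow_ne_zero _ (by
    intro h
    exact hd (by rw [← neg_sub, h, neg_zero]))
  have hPζ : (P.map (algebraMap F E)).eval ζ = ζ * (Q.map (algebraMap F E)).eval ζ := by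
    rw [hP, hQ]
    simp only [eval_mul, eval_C, eval_sub, eval_pow, eval_X, sub_self, zero_pow hℓ.ne_zero]
    ring
  have hQζ : (Q.map (algebraMap F E)).eval ζ ≠ 0 := by
    rw [hQ]
    simp only [eval_mul, eval_C, eval_sub, eval_pow, eval_X, sub_self, zero_pow hℓ.ne_zero,
      zero_sub]
    exact mul_ne_zero (inv_ne_zero hd) (neg_ne_zero.2 hd')
  let ι : F →+* R := (algebraMap F[X] R).comp C
  have hφι : φ.comp ι = algebraMap F E := by
    ext a
    simp [ι, hφ]
  have hιK : (algebraMap R (RatFunc F)).comp ι = algebraMap F (RatFunc F) := by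
    ext a
    simp only [ι, RingHom.comp_apply]
    rw [← IsScalarTower.algebraMap_apply F[X] R (RatFunc F)]
    simp
  have key : ∀ n, ∃ x : R, algebraMap R (RatFunc F) x = Xs n ∧ φ x = ζ := by
    intro n
    induction n with
    | zero =>
      refine ⟨algebraMap F[X] R X, ?_, by simp [hφ]⟩
      rw [← IsScalarTower.algebraMap_apply F[X] R (RatFunc F), hX0, RatFunc.algebraMap_X]
    | succ n ih =>
      obtain ⟨x, hx, hxζ⟩ := ih
      have e1 : ∀ p : F[X], φ (eval₂ ι x p) = (p.map (algebraMap F E)).eval ζ := by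
        intro p
        rw [hom_eval₂, hφι, hxζ, eval_map]
      have e2 : ∀ p : F[X], algebraMap R (RatFunc F) (eval₂ ι x p) = aeval (Xs n) p := by
        intro p
        rw [hom_eval₂, hιK, hx, aeval_def]
      obtain ⟨u, hu⟩ := hun (eval₂ ι x Q) (by rw [e1]; exact hQζ)
      have hmul : (eval₂ ι x P * (↑u⁻¹ : R)) * eval₂ ι x Q = eval₂ ι x P := by
        rw [← hu, mul_assoc, Units.inv_mul, mul_one]
      refine ⟨eval₂ ι x P * (↑u⁻¹ : R), ?_, ?_⟩
      · have h1 := congrArg (algebraMap R (RatFunc F)) hmul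
        rw [map_mul, e2, e2] at h1
        rw [hXs, eq_div_iff, h1]
        rw [← e2, ← hu]
        exact (u.isUnit.map (algebraMap R (RatFunc F))).ne_zero
      · have h1 := congrArg φ hmul
        rw [map_mul, e1, e1, hPζ] at h1
        exact mul_right_cancel₀ hQζ h1
  intro n
  obtain ⟨x, hx, hxζ⟩ := key n
  have hmon : (X ^ m - C ((ℓ : R) * x + ι γ) : R[X]).Monic :=
    monic_X_pow_sub_C _ (by omega)
  have hirrR : Irreducible (X ^ m - C ((ℓ : R) * x + ι γ) : R[X]) := by
    refine hmon.irreducible_of_irreducible_map φ _ ?_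
    have : φ (ι γ) = algebraMap F E γ := congrArg (fun f : F →+* E => f γ) hφι
    rw [Polynomial.map_sub, Polynomial.map_pow, map_X, map_C, RingHom.map_add, RingHom.map_mul,
      map_natCast φ, hxζ, this, add_comm]
    exact hirr
  have := (hmon.irreducible_iff_irreducible_map_fraction_map (K := RatFunc F)).1 hirrR
  have h2 : algebraMap R (RatFunc F) (ι γ) = algebraMap F (RatFunc F) γ :=
    congrArg (fun f : F →+* RatFunc F => f γ) hιK
  rw [Polynomial.map_sub, Polynomial.map_pow, map_X, map_C, RingHom.map_add, RingHom.map_mul,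
    map_natCast (algebraMap R (RatFunc F)), hx, h2] at this
  exact this
end
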